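/- Let K be a commutative ring and d ≥ 1. For j = 0,…,d−1, let n_j, p_j, r_j, k_j be natural numbers with k_j ≤ n_j, and let A_j ∈ K^{n_j × n_{j+1 mod d}}, B_j ∈ K^{p_j × n_j}, C_j ∈ K^{n_{j+1 mod d} × r_j}. For each j let X_j ⊆ {1,…,p_j} with |X_j| = k_j and Y_j ⊆ {1,…,r_j} with |Y_j| = k_j. Then ∑_{Q_0 ∈ 𝒬_{n_0}, …, Q_{d−1} ∈ 𝒬_{n_{d−1}}} ∑_{P_0 ∈ 𝒫_{n_0}, …, P_{d−1} ∈ 𝒫_{n_{d−1}}} ∏_{j=0}^{d−1} [B_j (Q_j P_j) A_j (Q_{j+1 mod d} P_{j+1 mod d})^{-1} C_j]_{X_j, Y_j} equals 0 unless k_0 = k_1 = ⋯ = k_{d−1}, in which case it equals (1+1)^{n_0+⋯+n_{d−1}} · (∏_{j=0}^{d−1} k_j!·(n_j−k_j)!·[B_j C_{j−1 mod d}]_{X_j, Y_{j−1 mod d}}) · [A_0 A_1 ⋯ A_{d−1}]^{(k_0)}, where the factorials are cast into K. -/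

import Mathlib

/-- `[A]_{S,T}`: the determinant of the submatrix of `A` with rows indexed by `S` and
columns indexed by `T`, both taken in increasing order. -/
def minorDet {K : Type} [CommRing K] {m p : ℕ} (A : Matrix (Fin m) (Fin p) K)
    (S : Finset (Fin m)) (T : Finset (Fin p)) : K :=
  if h : T.card = S.card then (A.submatrix (S.orderEmbOfFin rfl) (T.orderEmbOfFin h)).det else 0

/-- Reindex the rows of a matrix along an equality of dimensions. -/
def rowCast {K : Type} [CommRing K] {a b p : ℕ} (h : a = b) (M : Matrix (Fin a) (Fin p) K) :
    Matrix (Fin b) (Fin p) K :=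
  M.submatrix (Fin.cast h.symm) id

/-- Reindex the columns of a matrix along an equality of dimensions. -/
def colCast {K : Type} [CommRing K] {m a b : ℕ} (h : a = b) (M : Matrix (Fin m) (Fin a) K) :
    Matrix (Fin m) (Fin b) K :=
  M.submatrix id (Fin.cast h.symm)

open Fin.NatCast Fin.CommRing in
/-- Partial products `A_0 * A_1 * ⋯ * A_{m-1}` of a cyclic family of matrices
`A j : Matrix (Fin (n j)) (Fin (n (j+1))) K` for `j : Fin d`. -/
def cycProdAux {K : Type} [CommRing K] {d : ℕ} [NeZero d] {n : Fin d → ℕ}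
    (A : ∀ j : Fin d, Matrix (Fin (n j)) (Fin (n (j + 1))) K) :
    (m : ℕ) → Matrix (Fin (n 0)) (Fin (n (m : Fin d))) K
  | 0 => colCast (congrArg n (by simp)) (1 : Matrix (Fin (n 0)) (Fin (n 0)) K)
  | m + 1 => colCast (congrArg n (by push_cast; ring))
      (cycProdAux A m * A ((m : ℕ) : Fin d))

open Fin.NatCast Fin.CommRing in
/-- The cyclic product `A_0 * A_1 * ⋯ * A_{d-1}`, an `n 0 × n 0` matrix. -/
def cycProd {K : Type} [CommRing K] {d : ℕ} [NeZero d] {n : Fin d → ℕ}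
    (A : ∀ j : Fin d, Matrix (Fin (n j)) (Fin (n (j + 1))) K) :
    Matrix (Fin (n 0)) (Fin (n 0)) K :=
  colCast (congrArg n (by simp)) (cycProdAux A d)

/-- `[A]^{(k)}`: the sum of all principal `k × k` minors of `A`. -/
def minorSum {K : Type} [CommRing K] {m : ℕ} (A : Matrix (Fin m) (Fin m) K) (k : ℕ) : K :=
  ∑ S ∈ Finset.powersetCard k (Finset.univ : Finset (Fin m)), minorDet A S S

/-- The sign matrix (diagonal matrix with entries `±1`) determined by a choice of signs `ε`. -/
def signMatrix {m : ℕ} (K : Type) [CommRing K] (ε : Fin m → Bool) : Matrix (Fin m) (Fin m) K :=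
  Matrix.diagonal (fun i => if ε i then 1 else -1)


open Finset in
theorem cb_expand {K : Type} [CommRing K] {k n : ℕ} (A : Matrix (Fin k) (Fin n) K)
    (B : Matrix (Fin n) (Fin k) K) :
    (A * B).det = ∑ f : Fin k → Fin n, (∏ i, A i (f i)) * (B.submatrix f id).det := by
  have h1 : (A * B) = fun i => ∑ j, A i j • B j := by
    ext i l
    simp [Matrix.mul_apply]
  rw [h1]
  change Matrix.detRowAlternating.toMultilinearMap (fun i => ∑ j, A i j • B j) = _
  rw [MultilinearMap.map_sum]
  refine Finset.sum_congr rfl fun f _ => ?_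
  rw [MultilinearMap.map_smul_univ]
  rfl

open Finset in
theorem cb_fiber {K : Type} [CommRing K] {k n : ℕ} (A : Matrix (Fin k) (Fin n) K)
    (B : Matrix (Fin n) (Fin k) K) (U : Finset (Fin n)) (hU : U.card = k) :
    ∑ f : Fin k → Fin n with univ.image f = U, (∏ i, A i (f i)) * (B.submatrix f id).det =
      (A.submatrix id (U.orderEmbOfFin hU)).det * (B.submatrix (U.orderEmbOfFin hU) id).det := by
  rw [← Matrix.det_transpose (A.submatrix id (U.orderEmbOfFin hU)), Matrix.det_apply', Finset.sum_mul]
  symm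
  refine Finset.sum_bij (fun σ _ => (U.orderEmbOfFin hU) ∘ σ) ?_ ?_ ?_ ?_
  · intro σ _
    rw [mem_filter]
    refine ⟨mem_univ _, ?_⟩
    ext x
    constructor
    · intro hx
      obtain ⟨i, _, rfl⟩ := mem_image.1 hx
      exact U.orderEmbOfFin_mem hU _
    · intro hx
      have : x ∈ Set.range (U.orderEmbOfFin hU) := by
        rw [Finset.range_orderEmbOfFin]; exact hx
      obtain ⟨i, rfl⟩ := this
      exact mem_image.2 ⟨σ.symm i, mem_univ _, by simp⟩
  · intro σ _ τ _ h
    refine Equiv.ext fun i => ?_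
    have := congrFun h i
    simpa using this
  · intro f hf
    have hf := (mem_filter.1 hf).2
    have hinj : Function.Injective f := by
      have : (univ.image f).card = (univ : Finset (Fin k)).card := by
        rw [hf, hU]; simp
      have := Finset.card_image_iff.1 this
      simpa using this
    have hmem : ∀ i, f i ∈ U := fun i => by
      rw [← hf]; exact mem_image_of_mem _ (mem_univ _)
    let g : Fin k → Fin k := fun i => (U.orderIsoOfFin hU).symm ⟨f i, hmem i⟩
    have hg : Function.Injective g := by
      intro a b hab
      have := (U.orderIsoOfFin hU).symm.injective hab
      exact hinj (congrArg Subtype.val this)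
    refine ⟨Equiv.ofBijective g (Finite.injective_iff_bijective.1 hg), mem_univ _, ?_⟩
    funext i
    simp [g, ← Finset.coe_orderIsoOfFin_apply]
  · intro σ _
    have : (B.submatrix ((U.orderEmbOfFin hU) ∘ σ) id).det =
        (Equiv.Perm.sign σ : K) * (B.submatrix (U.orderEmbOfFin hU) id).det := by
      rw [← Matrix.det_permute]; rfl
    rw [this]
    simp only [Matrix.transpose_apply, Matrix.submatrix_apply, id, Function.comp]
    ring

theorem minorDet_eq {K : Type} [CommRing K] {m p k : ℕ} (A : Matrix (Fin m) (Fin p) K)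
    (S : Finset (Fin m)) (T : Finset (Fin p)) (hS : S.card = k) (hT : T.card = k) :
    minorDet A S T = (A.submatrix (S.orderEmbOfFin hS) (T.orderEmbOfFin hT)).det := by
  subst hS
  simp [minorDet, hT]

theorem minorDet_ne {K : Type} [CommRing K] {m p : ℕ} (A : Matrix (Fin m) (Fin p) K)
    (S : Finset (Fin m)) (T : Finset (Fin p)) (h : S.card ≠ T.card) :
    minorDet A S T = 0 := by
  simp [minorDet, Ne.symm h]

open Finset in
/-- Cauchy–Binet. -/
theorem minorDet_mul {K : Type} [CommRing K] {m n p : ℕ} (A : Matrix (Fin m) (Fin n) K)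
    (B : Matrix (Fin n) (Fin p) K) (S : Finset (Fin m)) (T : Finset (Fin p)) :
    minorDet (A * B) S T = ∑ U, minorDet A S U * minorDet B U T := by
  by_cases h : S.card = T.card
  swap
  · rw [minorDet_ne _ _ _ h]
    symm
    refine Finset.sum_eq_zero fun U _ => ?_
    by_cases h' : S.card = U.card
    · rw [minorDet_ne B U T (fun h'' => h (h'.trans h'')), mul_zero]
    · rw [minorDet_ne A S U h', zero_mul]
  obtain ⟨k, hk⟩ : ∃ k, S.card = k := ⟨_, rfl⟩
  have hT : T.card = k := h ▸ hk
  rw [minorDet_eq _ S T hk hT]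
  have h1 : (A * B).submatrix (S.orderEmbOfFin hk) (T.orderEmbOfFin hT) =
      A.submatrix (S.orderEmbOfFin hk) id * B.submatrix id (T.orderEmbOfFin hT) := by
    ext i j
    simp [Matrix.mul_apply]
  rw [h1, cb_expand]
  rw [← Finset.sum_fiberwise (s := univ) (g := fun f : Fin k → Fin n => univ.image f)]
  refine Finset.sum_congr rfl fun U _ => ?_
  by_cases hU : U.card = k
  · rw [cb_fiber _ _ U hU, minorDet_eq A S U hk hU, minorDet_eq B U T hU hT]
    rfl
  · rw [minorDet_ne A S U (fun h => hU (h ▸ hk)), zero_mul]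
    refine Finset.sum_eq_zero fun f hf => ?_
    have hf := (mem_filter.1 hf).2
    have : ¬ Function.Injective f := fun hi => hU (by
      rw [← hf, Finset.card_image_of_injective _ hi]; simp)
    simp only [Function.Injective, not_forall] at this
    obtain ⟨a, b, hab, hne⟩ := this
    rw [Matrix.det_zero_of_row_eq hne, mul_zero]
    ext j
    simp [hab]

theorem minorDet_one_self {K : Type} [CommRing K] {m : ℕ} (S : Finset (Fin m)) :
    minorDet (1 : Matrix (Fin m) (Fin m) K) S S = 1 := by
  rw [minorDet_eq _ S S rfl rfl, Matrix.submatrix_one _ (S.orderEmbOfFin rfl).injective,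
    Matrix.det_one]

/-- vanishing row -/
theorem minorDet_row_zero {K : Type} [CommRing K] {m p : ℕ} (A : Matrix (Fin m) (Fin p) K)
    (S : Finset (Fin m)) (T : Finset (Fin p)) (i : Fin m) (hi : i ∈ S)
    (h : ∀ j ∈ T, A i j = 0) : minorDet A S T = 0 := by
  by_cases hc : T.card = S.card
  · rw [minorDet_eq A S T rfl hc]
    have : i ∈ Set.range (S.orderEmbOfFin rfl) := by
      rw [Finset.range_orderEmbOfFin]; exact hi
    obtain ⟨a, rfl⟩ := this
    refine Matrix.det_eq_zero_of_row_eq_zero a fun j => ?_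
    exact h _ (T.orderEmbOfFin_mem hc j)
  · rw [minorDet_ne _ _ _ (Ne.symm hc)]

theorem minorDet_one {K : Type} [CommRing K] {m : ℕ} (S T : Finset (Fin m)) :
    minorDet (1 : Matrix (Fin m) (Fin m) K) S T = if S = T then 1 else 0 := by
  split_ifs with h
  · subst h; exact minorDet_one_self S
  · by_cases hc : S.card = T.card
    · have : ¬ S ⊆ T := fun hs => h (Finset.eq_of_subset_of_card_le hs hc.ge)
      obtain ⟨i, hi, hiT⟩ := Finset.not_subset.1 this
      exact minorDet_row_zero _ _ _ i hi fun j hj => by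
        rw [Matrix.one_apply_ne]; rintro rfl; exact hiT hj
    · exact minorDet_ne _ _ _ hc

theorem minorDet_transpose {K : Type} [CommRing K] {m p : ℕ} (A : Matrix (Fin m) (Fin p) K)
    (S : Finset (Fin p)) (T : Finset (Fin m)) : minorDet A.transpose S T = minorDet A T S := by
  by_cases hc : T.card = S.card
  · rw [minorDet_eq _ S T rfl hc, minorDet_eq A T S hc rfl, ← Matrix.det_transpose]
    rfl
  · rw [minorDet_ne _ _ _ (Ne.symm hc), minorDet_ne _ _ _ hc]

theorem minorDet_sign_mul {K : Type} [CommRing K] {m p : ℕ} (A : Matrix (Fin m) (Fin p) K)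
    (ε : Fin m → Bool) (S : Finset (Fin m)) (T : Finset (Fin p)) :
    minorDet (signMatrix K ε * A) S T = (∏ i ∈ S, if ε i then (1 : K) else -1) * minorDet A S T := by
  by_cases hc : T.card = S.card
  · rw [minorDet_eq _ S T rfl hc, minorDet_eq A S T rfl hc]
    have h1 : (signMatrix K ε * A).submatrix (S.orderEmbOfFin rfl) (T.orderEmbOfFin hc) =
      Matrix.of fun i j => (if ε (S.orderEmbOfFin rfl i) then (1 : K) else -1) *
        A.submatrix (S.orderEmbOfFin rfl) (T.orderEmbOfFin hc) i j := by
      ext i j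
      simp [signMatrix]
    rw [h1, Matrix.det_mul_column]
    congr 1
    conv_rhs => rw [← Finset.map_orderEmbOfFin_univ S rfl, Finset.prod_map]
    rfl
  · rw [minorDet_ne _ _ _ (Ne.symm hc), minorDet_ne _ _ _ (Ne.symm hc), mul_zero]

theorem permMatrix_mul_transpose {K : Type} [CommRing K] {m : ℕ} (π : Equiv.Perm (Fin m)) :
    π.permMatrix K * (π.permMatrix K).transpose = 1 := by
  ext i j
  simp [Equiv.Perm.permMatrix, Matrix.mul_apply, PEquiv.toMatrix_apply, Matrix.one_apply, Equiv.toPEquiv]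

theorem monomial_inv {K : Type} [CommRing K] {m : ℕ} (ε : Fin m → Bool) (π : Equiv.Perm (Fin m)) :
    (signMatrix K ε * π.permMatrix K)⁻¹ = (signMatrix K ε * π.permMatrix K).transpose := by
  refine Matrix.inv_eq_right_inv ?_
  rw [Matrix.transpose_mul, Matrix.mul_assoc, ← Matrix.mul_assoc (π.permMatrix K),
    permMatrix_mul_transpose, Matrix.one_mul]
  rw [signMatrix, Matrix.diagonal_transpose, Matrix.diagonal_mul_diagonal, ← Matrix.diagonal_one]
  congr 1
  funext i
  split_ifs <;> simp

theorem minorDet_perm_ne {K : Type} [CommRing K] {m : ℕ} (π : Equiv.Perm (Fin m))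
    (U S : Finset (Fin m)) (h : U.map π.toEmbedding ≠ S) :
    minorDet (π.permMatrix K) U S = 0 := by
  by_cases hc : U.card = S.card
  · have : ¬ U.map π.toEmbedding ⊆ S := fun hs =>
      h (Finset.eq_of_subset_of_card_le hs (by rw [Finset.card_map, hc]))
    obtain ⟨i, hi, hiT⟩ := Finset.not_subset.1 this
    obtain ⟨a, ha, rfl⟩ := Finset.mem_map.1 hi
    refine minorDet_row_zero _ _ _ a ha fun j hj => ?_
    have : π a ≠ j := by rintro rfl; exact hiT hj
    simp [Equiv.Perm.permMatrix, PEquiv.toMatrix_apply, Equiv.toPEquiv, this]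
  · exact minorDet_ne _ _ _ hc

theorem minorDet_perm_sq {K : Type} [CommRing K] {m : ℕ} (π : Equiv.Perm (Fin m))
    (U : Finset (Fin m)) :
    minorDet (π.permMatrix K) U (U.map π.toEmbedding) *
      minorDet (π.permMatrix K) U (U.map π.toEmbedding) = 1 := by
  have h := minorDet_mul (π.permMatrix K) (π.permMatrix K).transpose U U
  rw [permMatrix_mul_transpose, minorDet_one_self,
    Finset.sum_eq_single (U.map π.toEmbedding)] at h
  · rw [minorDet_transpose] at h; exact h.symm
  · intro S _ hS
    rw [minorDet_perm_ne _ _ _ hS.symm, zero_mul]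
  · simp

theorem minorDet_perm_mul {K : Type} [CommRing K] {m : ℕ} (π : Equiv.Perm (Fin m))
    (U S T : Finset (Fin m)) :
    minorDet (π.permMatrix K) U S * minorDet (π.permMatrix K) U T =
      if S = T then (if U.map π.toEmbedding = S then 1 else 0) else 0 := by
  by_cases hS : U.map π.toEmbedding = S
  · by_cases hT : S = T
    · subst hT; subst hS; simp [minorDet_perm_sq]
    · rw [minorDet_perm_ne π U T (fun h => hT (hS.symm.trans h))]; simp [hT]
  · rw [minorDet_perm_ne π U S hS]; simp [hS]

open Finset in
theorem card_perm_map {m : ℕ} (U S : Finset (Fin m)) (h : U.card = S.card) :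
    (univ.filter fun π : Equiv.Perm (Fin m) => U.map π.toEmbedding = S).card =
      U.card.factorial * (m - U.card).factorial := by
  have hex : ∀ S' : Finset (Fin m), S'.card = S.card → ∃ ρ : Equiv.Perm (Fin m),
      S.map ρ.toEmbedding = S' := by
    intro S' hS'
    let e : {x // x ∈ S} ≃ {x // x ∈ S'} := Finset.equivOfCardEq hS'.symm
    refine ⟨e.extendSubtype, ?_⟩
    refine Finset.eq_of_subset_of_card_le ?_ (by rw [Finset.card_map, hS'])
    intro x hx
    obtain ⟨a, ha, rfl⟩ := Finset.mem_map.1 hx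
    exact e.extendSubtype_mem a ha
  have hcount : ∀ S' ∈ powersetCard U.card (univ : Finset (Fin m)),
      (univ.filter fun π : Equiv.Perm (Fin m) => U.map π.toEmbedding = S').card =
      (univ.filter fun π : Equiv.Perm (Fin m) => U.map π.toEmbedding = S).card := by
    intro S' hS'
    have hS' := (mem_powersetCard.1 hS').2
    obtain ⟨ρ, rfl⟩ := hex S' (hS'.trans h)
    symm
    refine Finset.card_bij (fun π _ => π.trans ρ) ?_ ?_ ?_
    · intro π hπ
      have hπ := (mem_filter.1 hπ).2
      refine mem_filter.2 ⟨mem_univ _, ?_⟩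
      rw [← hπ, Finset.map_map]
      rfl
    · intro a _ b _ hab
      exact Equiv.ext fun x => ρ.injective (congrArg (fun f : Equiv.Perm (Fin m) => f x) hab)
    · intro τ hτ
      have hτ := (mem_filter.1 hτ).2
      refine ⟨τ.trans ρ.symm, mem_filter.2 ⟨mem_univ _, ?_⟩, ?_⟩
      · apply Finset.map_injective ρ.toEmbedding
        rw [← hτ, Finset.map_map]
        congr 1
        ext x
        simp
      · ext x
        simp
  have htot := Finset.card_eq_sum_card_fiberwise
    (s := (univ : Finset (Equiv.Perm (Fin m)))) (t := powersetCard U.card (univ : Finset (Fin m)))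
    (f := fun π => U.map π.toEmbedding) (by intro π _; simp)
  rw [Finset.sum_congr rfl hcount, Finset.sum_const, Finset.card_powersetCard, Finset.card_univ,
    Fintype.card_perm, Finset.card_univ, Fintype.card_fin, smul_eq_mul] at htot
  have hle : U.card ≤ m := by simpa using Finset.card_le_univ U
  have h2 := Nat.choose_mul_factorial_mul_factorial hle
  have hpos : 0 < m.choose U.card := Nat.choose_pos hle
  refine Nat.eq_of_mul_eq_mul_left hpos ?_
  rw [← htot, ← h2, mul_assoc]

theorem signs_sum_eq {K : Type} [CommRing K] {m : ℕ} (U V : Finset (Fin m)) :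
    ∑ ε : Fin m → Bool, (∏ i ∈ U, if ε i then (1 : K) else -1) *
      (∏ i ∈ V, if ε i then (1 : K) else -1) = if U = V then (1 + 1) ^ m else 0 := by
  have h1 : ∀ (W : Finset (Fin m)) (ε : Fin m → Bool),
      (∏ i ∈ W, if ε i then (1 : K) else -1) =
        ∏ i, if i ∈ W then (if ε i then (1 : K) else -1) else 1 := by
    intro W ε
    rw [← Finset.prod_filter]; simp
  simp only [h1, ← Finset.prod_mul_distrib]
  rw [← Fintype.prod_sum (fun i (b : Bool) => (if i ∈ U then (if b then (1 : K) else -1) else 1) *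
    (if i ∈ V then (if b then (1 : K) else -1) else 1))]
  split_ifs with h
  · subst h
    rw [Finset.prod_congr rfl (g := fun _ => (1 + 1 : K))]
    · simp
    · intro i _
      by_cases hi : i ∈ U <;> simp [hi, one_add_one_eq_two]
  · have : ∃ i, ¬ (i ∈ U ↔ i ∈ V) := by
      by_contra hc
      push Not at hc
      exact h (Finset.ext fun i => by have := hc i; tauto)
    obtain ⟨i, hi⟩ := this
    refine Finset.prod_eq_zero (Finset.mem_univ i) ?_
    by_cases hU : i ∈ U <;> by_cases hV : i ∈ V <;> simp [hU, hV] at hi ⊢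

theorem averaging {K : Type} [CommRing K] {m : ℕ} (U S T V : Finset (Fin m)) :
    ∑ ε : Fin m → Bool, ∑ π : Equiv.Perm (Fin m),
      minorDet (signMatrix K ε * π.permMatrix K) U S *
      minorDet (signMatrix K ε * π.permMatrix K)⁻¹ T V =
    if U = V ∧ S = T ∧ U.card = S.card then
      (1 + 1 : K) ^ m * ((U.card.factorial * (m - U.card).factorial : ℕ) : K) else 0 := by
  have h1 : ∀ (ε : Fin m → Bool) (π : Equiv.Perm (Fin m)),
      minorDet (signMatrix K ε * π.permMatrix K) U S *
      minorDet (signMatrix K ε * π.permMatrix K)⁻¹ T V =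
      ((∏ i ∈ U, if ε i then (1 : K) else -1) * (∏ i ∈ V, if ε i then (1 : K) else -1)) *
        (minorDet (π.permMatrix K) U S * minorDet (π.permMatrix K) V T) := by
    intro ε π
    rw [monomial_inv, minorDet_transpose, minorDet_sign_mul, minorDet_sign_mul]
    ring
  simp only [h1]
  rw [← Finset.sum_mul_sum, signs_sum_eq]
  by_cases hUV : U = V
  swap
  · simp [hUV]
  subst hUV
  simp only [minorDet_perm_mul]
  by_cases hST : S = T
  swap
  · simp [hST]
  subst hST
  simp only [if_true, true_and]
  by_cases hc : U.card = S.card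
  · rw [if_pos hc, ← card_perm_map U S hc, Finset.sum_boole]
  · rw [if_neg hc, Finset.sum_eq_zero, mul_zero]
    intro π _
    rw [if_neg]
    intro h
    apply hc
    rw [← h, Finset.card_map]

theorem path_sum {K : Type} [CommRing K] (κ : ℕ → Type) [∀ i, Fintype (κ i)]
    (W : ∀ i, κ i → κ (i + 1) → K) (P : ∀ m, κ m → K)
    (hs : ∀ m u, P (m + 1) u = ∑ t, P m t * W m t u) (m : ℕ) (u : κ (m + 1)) :
    P (m + 1) u = ∑ f : (∀ i : Fin (m + 1), κ i),
      P 0 (f 0) * (∏ i : Fin m, W i (f i.castSucc) (f i.succ)) * W m (f (Fin.last m)) u := by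
  induction m with
  | zero =>
    rw [hs]
    rw [← Equiv.sum_comp (Fin.snocEquiv (fun i : Fin 1 => κ i)), Fintype.sum_prod_type]
    refine Finset.sum_congr rfl fun t _ => ?_
    rw [Fintype.sum_unique]
    simp
    rfl
  | succ m ih =>
    rw [hs]
    rw [← Equiv.sum_comp (Fin.snocEquiv (fun i : Fin (m + 1 + 1) => κ i)), Fintype.sum_prod_type]
    refine Finset.sum_congr rfl fun t _ => ?_
    rw [ih, Finset.sum_mul]
    refine Finset.sum_congr rfl fun f _ => ?_
    rw [Fin.prod_univ_castSucc]
    have h1 : ∀ i : Fin (m + 1), (Fin.snocEquiv (fun i : Fin (m + 1 + 1) => κ i)) (t, f) i.castSucc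
      = f i := fun i => Fin.snoc_castSucc (α := fun i : Fin (m + 1 + 1) => κ i) _ _ _
    have h2 : (Fin.snocEquiv (fun i : Fin (m + 1 + 1) => κ i)) (t, f) (Fin.last _) = t :=
      Fin.snoc_last (α := fun i : Fin (m + 1 + 1) => κ i) _ _
    have h0 : (Fin.snocEquiv (fun i : Fin (m + 1 + 1) => κ i)) (t, f) 0 = f 0 := h1 0
    have h3 : ∀ i : Fin m, (Fin.snocEquiv (fun i : Fin (m + 1 + 1) => κ i)) (t, f) i.castSucc.succ
      = f i.succ := fun i => h1 i.succ
    have h4 : (Fin.snocEquiv (fun i : Fin (m + 1 + 1) => κ i)) (t, f) (Fin.last m).succ = t := h2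
    rw [h2, h0, h4, h1 (Fin.last m)]
    simp only [h1, h3]
    simp only [Fin.val_castSucc, Fin.val_last]
    ring

/-- one step of the cyclic product, with a propositional target index -/
noncomputable def stepW {K : Type} [CommRing K] {d : ℕ} [NeZero d] {n : Fin d → ℕ}
    (A : ∀ j : Fin d, Matrix (Fin (n j)) (Fin (n (j + 1))) K) (i j : Fin d)
    (s : Finset (Fin (n i))) (t : Finset (Fin (n j))) : K :=
  if h : j = i + 1 then minorDet (A i) s (cast (by rw [h]) t) else 0

theorem stepW_self {K : Type} [CommRing K] {d : ℕ} [NeZero d] {n : Fin d → ℕ}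
    (A : ∀ j : Fin d, Matrix (Fin (n j)) (Fin (n (j + 1))) K) (i : Fin d)
    (s : Finset (Fin (n i))) (t : Finset (Fin (n (i + 1)))) :
    stepW A i (i + 1) s t = minorDet (A i) s t := by
  simp [stepW]

theorem colCast_rfl {K : Type} [CommRing K] {m a : ℕ} (h : a = a) (M : Matrix (Fin m) (Fin a) K) :
    colCast h M = M := rfl

theorem stepW_colCast {K : Type} [CommRing K] {d : ℕ} [NeZero d] {n : Fin d → ℕ}
    (A : ∀ j : Fin d, Matrix (Fin (n j)) (Fin (n (j + 1))) K) {q : ℕ} (i j : Fin d) (hj : j = i + 1)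
    (h : n (i + 1) = n j) (M : Matrix (Fin q) (Fin (n i)) K) (s : Finset (Fin q))
    (u : Finset (Fin (n j))) :
    minorDet (colCast h (M * A i)) s u = ∑ t, minorDet M s t * stepW A i j t u := by
  subst hj
  rw [colCast_rfl, minorDet_mul]
  simp only [stepW_self]

theorem colCast_transfer {K : Type} [CommRing K] {d : ℕ} [NeZero d] {n : Fin d → ℕ}
    {q : ℕ} (s : Finset (Fin q)) (i j : Fin d) (hj : j = i)
    (h : n j = n i) (M : Matrix (Fin q) (Fin (n j)) K)
    (g : ∀ j, Finset (Fin (n j)) → K) (hM : ∀ u, minorDet M s u = g j u)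
    (u : Finset (Fin (n i))) : minorDet (colCast h M) s u = g i u := by
  subst hj
  rw [colCast_rfl, hM]

theorem colCast_one {K : Type} [CommRing K] {d : ℕ} [NeZero d] {n : Fin d → ℕ}
    (j : Fin d) (hj : j = 0) (h : n 0 = n j) (s : Finset (Fin (n 0)))
    (S : ∀ j, Finset (Fin (n j))) :
    minorDet (colCast h (1 : Matrix (Fin (n 0)) (Fin (n 0)) K)) s (S j) =
      if S 0 = s then 1 else 0 := by
  subst hj
  rw [colCast_rfl, minorDet_one]
  simp only [eq_comm]

open Fin.NatCast Fin.CommRing in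
theorem cyc_entry {K : Type} [CommRing K] (d : ℕ) [NeZero d] {n : Fin d → ℕ}
    (A : ∀ j : Fin d, Matrix (Fin (n j)) (Fin (n (j + 1))) K) (s : Finset (Fin (n 0))) :
    minorDet (cycProd A) s s = ∑ S : (∀ j, Finset (Fin (n j))), (if S 0 = s then 1 else 0) *
      ∏ j, minorDet (A j) (S j) (S (j + 1)) := by
  obtain ⟨m, rfl⟩ : ∃ m, d = m + 1 := Nat.exists_eq_succ_of_ne_zero (NeZero.ne d)
  have key := path_sum (fun i : ℕ => Finset (Fin (n (i : Fin (m + 1)))))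
    (fun i => stepW A (i : Fin (m + 1)) ((i + 1 : ℕ) : Fin (m + 1)))
    (fun i t => minorDet (cycProdAux A i) s t)
    (by
      intro i u
      exact stepW_colCast A _ _ (by push_cast; ring) _ _ s u) m
  have hcast : ∀ j : Fin (m + 1), ((j : ℕ) : Fin (m + 1)) = j := fun j => by simp
  let e : Fin (m + 1) ≃ Fin (m + 1) :=
    { toFun := fun j => ((j : ℕ) : Fin (m + 1))
      invFun := fun j => j
      left_inv := fun j => hcast j
      right_inv := fun j => hcast j }
  obtain ⟨g, hg⟩ : ∃ g : ∀ j : Fin (m + 1), Finset (Fin (n j)) → K, g =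
      (fun (j : Fin (m + 1)) (u : Finset (Fin (n j))) => ∑ S : (∀ j, Finset (Fin (n j))),
        (if S 0 = s then 1 else 0) *
        (∏ i : Fin m, stepW A i.castSucc i.succ (S i.castSucc) (S i.succ)) *
          stepW A (Fin.last m) j (S (Fin.last m)) u) := ⟨_, rfl⟩
  have key2 : ∀ u, minorDet (cycProdAux A (m + 1)) s u = g ((m + 1 : ℕ) : Fin (m + 1)) u := by
    intro u
    refine (key u).trans ?_
    rw [hg]
    symm
    refine Fintype.sum_equiv (Equiv.piCongrLeft (fun j => Finset (Fin (n j))) e).symm _ _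
      fun S => ?_
    symm
    have hv : ∀ j, (Equiv.piCongrLeft (fun j => Finset (Fin (n j))) e).symm S j = S (e j) :=
      fun j => Equiv.piCongrLeft_symm_apply _ e S j
    congr 1
    · congr 1
      · rw [hv]
        exact colCast_one _ (by simp) _ s S
      · refine Finset.prod_congr rfl fun i _ => ?_
        rw [hv, hv]
        have hF : ∀ a b a' b' : Fin (m + 1), a = a' → b = b' →
          stepW A a b (S a) (S b) = stepW A a' b' (S a') (S b') := by
            rintro a b _ _ rfl rfl; rfl
        exact hF _ _ _ _ (hcast i.castSucc) (hcast i.succ)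
    · rw [hv]
      have hF : ∀ (a a' b : Fin (m + 1)) (u : Finset (Fin (n b))), a = a' →
        stepW A a b (S a) u = stepW A a' b (S a') u := by
          rintro a _ b u rfl; rfl
      exact hF _ _ _ _ (hcast (Fin.last m))
  have key3 := colCast_transfer s 0 ((m + 1 : ℕ) : Fin (m + 1)) (by simp)
    (congrArg n (by simp)) (cycProdAux A (m + 1)) g key2 s
  refine key3.trans ?_
  rw [hg]
  refine Finset.sum_congr rfl fun S _ => ?_
  by_cases h0 : S 0 = s
  swap
  · simp [h0]
  simp only [h0, if_true, one_mul]
  simp only [← stepW_self]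
  rw [Fin.prod_univ_castSucc]
  have hF : ∀ a b b' : Fin (m + 1), b = b' →
          stepW A a b (S a) (S b) = stepW A a b' (S a) (S b') := by
            rintro a b _ rfl; rfl
  congr 1
  · refine Finset.prod_congr rfl fun i _ => ?_
    exact hF _ _ _ (by ext; simp)
  · rw [← h0]
    exact hF _ _ _ (by simp)

open Fin.NatCast Fin.CommRing in
theorem cyc_const {α : Type} (d : ℕ) [NeZero d] (f : Fin d → α) (h : ∀ j, f (j + 1) = f j)
    (j : Fin d) : f j = f 0 := by
  have : ∀ i : ℕ, f (i : Fin d) = f 0 := by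
    intro i
    induction i with
    | zero => simp
    | succ i ih => rw [← ih, ← h (i : Fin d)]; push_cast; rfl
  have h2 := this j
  simpa using h2

theorem cyc_trace {K : Type} [CommRing K] (d : ℕ) [NeZero d] {n : Fin d → ℕ}
    (A : ∀ j : Fin d, Matrix (Fin (n j)) (Fin (n (j + 1))) K) (k : ℕ) :
    ∑ S : (∀ j, Finset (Fin (n j))),
      ∏ j, ((if (S j).card = k then 1 else 0) * minorDet (A j) (S j) (S (j + 1))) =
      minorSum (cycProd A) k := by
  have h1 : ∀ S : (∀ j, Finset (Fin (n j))),
      ∏ j, ((if (S j).card = k then 1 else 0) * minorDet (A j) (S j) (S (j + 1))) =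
      (if (S 0).card = k then 1 else 0) * ∏ j, minorDet (A j) (S j) (S (j + 1)) := by
    intro S
    by_cases hc : ∀ j, (S (j + 1)).card = (S j).card
    · have := cyc_const d (fun j => (S j).card) hc
      by_cases h0 : (S 0).card = k
      · simp [this, h0]
      · simp only [this, h0, if_false, zero_mul]
        simp [NeZero.ne d]
    · push Not at hc
      obtain ⟨j, hj⟩ := hc
      have hz : minorDet (A j) (S j) (S (j + 1)) = 0 := minorDet_ne _ _ _ hj.symm
      rw [Finset.prod_eq_zero (Finset.mem_univ j) (by rw [hz, mul_zero]),
        Finset.prod_eq_zero (Finset.mem_univ j) hz, mul_zero]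
  simp only [h1]
  rw [minorSum]
  simp only [cyc_entry]
  rw [Finset.sum_comm]
  refine Finset.sum_congr rfl fun S _ => ?_
  rw [← Finset.sum_mul]
  congr 1
  rw [Finset.sum_ite_eq]
  simp [Finset.mem_powersetCard]

theorem shift_sum {K : Type} [CommRing K] {d : ℕ} [NeZero d] {ι : Fin d → Type}
    [∀ j, Fintype (ι j)] (F : (∀ j, ι (j + 1)) → K) :
    ∑ T : (∀ j, ι (j + 1)), F T = ∑ T : (∀ j, ι j), F (fun j => T (j + 1)) := by
  open Fin.CommRing in
  exact (Fintype.sum_equiv (Equiv.piCongrLeft ι (Equiv.addRight (1 : Fin d))).symm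
    (fun T => F (fun j => T (j + 1))) F (fun S => rfl)).symm

theorem shift_prod {K : Type} [CommRing K] {d : ℕ} [NeZero d] (f : Fin d → K) :
    ∏ j, f (j + 1) = ∏ j, f j := by
  open Fin.CommRing in
  exact Equiv.prod_comp (Equiv.addRight (1 : Fin d)) f

theorem main_sum {K : Type} [CommRing K] {d : ℕ} [NeZero d] {ι G H : Fin d → Type}
    [∀ j, Fintype (ι j)] [∀ j, Fintype (G j)] [∀ j, Fintype (H j)]
    (b : ∀ j, ι j → K) (M N : ∀ j, G j → H j → ι j → ι j → K) (a : ∀ j, ι j → ι (j + 1) → K)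
    (c : ∀ j, ι (j + 1) → K) (avg : ∀ j, ι j → ι j → ι j → ι j → K)
    (havg : ∀ j U S T V, ∑ e, ∑ p, M j e p U S * N j e p T V = avg j U S T V) :
    ∑ e : (∀ j, G j), ∑ p : (∀ j, H j), ∏ j, ∑ U, ∑ S, ∑ T, ∑ V,
      b j U * M j (e j) (p j) U S * a j S T * N (j + 1) (e (j + 1)) (p (j + 1)) T V * c j V =
    ∑ U : (∀ j, ι j), ∑ S : (∀ j, ι j), ∑ T : (∀ j, ι j), ∑ V : (∀ j, ι j),
      (∏ j, b j (U j) * a j (S j) (T (j + 1)) * c j (V (j + 1))) *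
        ∏ j, avg j (U j) (S j) (T j) (V j) := by
  have h1 : ∀ (e : (∀ j, G j)) (p : (∀ j, H j)), ∏ j, ∑ U, ∑ S, ∑ T, ∑ V,
      b j U * M j (e j) (p j) U S * a j S T * N (j + 1) (e (j + 1)) (p (j + 1)) T V * c j V =
      ∑ U : (∀ j, ι j), ∑ S : (∀ j, ι j), ∑ T : (∀ j, ι j), ∑ V : (∀ j, ι j),
      (∏ j, b j (U j) * a j (S j) (T (j + 1)) * c j (V (j + 1))) *
        ∏ j, (M j (e j) (p j) (U j) (S j) * N j (e j) (p j) (T j) (V j)) := by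
    intro e p
    rw [Fintype.prod_sum]
    refine Finset.sum_congr rfl fun U _ => ?_
    rw [Fintype.prod_sum]
    refine Finset.sum_congr rfl fun S _ => ?_
    rw [Fintype.prod_sum, shift_sum]
    refine Finset.sum_congr rfl fun T _ => ?_
    rw [Fintype.prod_sum, shift_sum]
    refine Finset.sum_congr rfl fun V _ => ?_
    simp only [Finset.prod_mul_distrib]
    rw [shift_prod (fun j => N j (e j) (p j) (T j) (V j))]
    ring
  simp only [h1]
  have h2 : ∀ U S T V : (∀ j, ι j), ∏ j, avg j (U j) (S j) (T j) (V j) =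
      ∑ e : (∀ j, G j), ∑ p : (∀ j, H j),
        ∏ j, (M j (e j) (p j) (U j) (S j) * N j (e j) (p j) (T j) (V j)) := by
    intro U S T V
    simp only [← havg]
    rw [Fintype.prod_sum]
    refine Finset.sum_congr rfl fun e _ => ?_
    rw [Fintype.prod_sum]
  simp only [h2, Finset.mul_sum]
  have h3 : ∀ F : (∀ j, G j) → (∀ j, H j) → (∀ j, ι j) → (∀ j, ι j) → (∀ j, ι j) → (∀ j, ι j) → K,
      ∑ e, ∑ p, ∑ U, ∑ S, ∑ T, ∑ V, F e p U S T V = ∑ U, ∑ S, ∑ T, ∑ V, ∑ e, ∑ p, F e p U S T V := by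
    intro F
    have sw : ∀ f : (∀ j, G j) → (∀ j, H j) → (∀ j, ι j) → K,
        ∑ e, ∑ p, ∑ U, f e p U = ∑ U, ∑ e, ∑ p, f e p U := by
      intro f
      rw [Finset.sum_comm]
      rw [Finset.sum_comm]
      have : ∀ e, ∑ p, ∑ U, f e p U = ∑ U, ∑ p, f e p U := fun e => Finset.sum_comm
      simp only [this]
      rw [Finset.sum_comm]
    rw [sw]
    refine Finset.sum_congr rfl fun U _ => ?_
    rw [sw]
    refine Finset.sum_congr rfl fun S _ => ?_
    rw [sw]
    refine Finset.sum_congr rfl fun T _ => ?_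
    rw [sw]
  exact h3 _

theorem collapse_sum {K : Type} [CommRing K] {d : ℕ} [NeZero d] {ι : Fin d → Type}
    [∀ j, Fintype (ι j)] [∀ j, DecidableEq (ι j)]
    (F : (∀ j, ι j) → (∀ j, ι j) → (∀ j, ι j) → (∀ j, ι j) → K)
    (q : ∀ j, ι j → ι j → Prop) [∀ j U S, Decidable (q j U S)] (w : ∀ j, ι j → K) :
    ∑ U : (∀ j, ι j), ∑ S : (∀ j, ι j), ∑ T : (∀ j, ι j), ∑ V : (∀ j, ι j), F U S T V *
      ∏ j, (if U j = V j ∧ S j = T j ∧ q j (U j) (S j) then w j (U j) else 0) =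
    ∑ U : (∀ j, ι j), ∑ S : (∀ j, ι j), F U S S U *
      ∏ j, (if q j (U j) (S j) then w j (U j) else 0) := by
  refine Finset.sum_congr rfl fun U _ => ?_
  refine Finset.sum_congr rfl fun S _ => ?_
  rw [Finset.sum_eq_single S, Finset.sum_eq_single U]
  · simp
  · intro V _ hV
    obtain ⟨j, hj⟩ := Function.ne_iff.1 hV
    rw [Finset.prod_eq_zero (Finset.mem_univ j), mul_zero]
    rw [if_neg]; exact fun h => hj h.1.symm
  · simp
  · intro T _ hT
    obtain ⟨j, hj⟩ := Function.ne_iff.1 hT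
    refine Finset.sum_eq_zero fun V _ => ?_
    rw [Finset.prod_eq_zero (Finset.mem_univ j), mul_zero]
    rw [if_neg]; exact fun h => hj h.2.1.symm
  · simp

theorem rowCast_shift {K : Type} [CommRing K] {d : ℕ} [NeZero d] {n p r : Fin d → ℕ}
    (B : ∀ j : Fin d, Matrix (Fin (p j)) (Fin (n j)) K)
    (C : ∀ j : Fin d, Matrix (Fin (n (j + 1))) (Fin (r j)) K)
    (X : ∀ j : Fin d, Finset (Fin (p j))) (Y : ∀ j : Fin d, Finset (Fin (r j)))
    (i j : Fin d) (hij : i = j) (h : n (i + 1) = n (j + 1)) :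
    minorDet (B (j + 1) * rowCast h (C i)) (X (j + 1)) (Y i) =
      minorDet (B (j + 1) * C j) (X (j + 1)) (Y j) := by
  subst hij
  rfl

theorem bc_sum {K : Type} [CommRing K] {d : ℕ} [NeZero d] {n p r : Fin d → ℕ}
    (B : ∀ j : Fin d, Matrix (Fin (p j)) (Fin (n j)) K)
    (C : ∀ j : Fin d, Matrix (Fin (n (j + 1))) (Fin (r j)) K)
    (X : ∀ j : Fin d, Finset (Fin (p j))) (Y : ∀ j : Fin d, Finset (Fin (r j)))
    (h : ∀ j : Fin d, n (j - 1 + 1) = n j) :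
    ∑ U : (∀ j, Finset (Fin (n j))),
      ((∏ j, minorDet (B j) (X j) (U j)) * ∏ j, minorDet (C j) (U (j + 1)) (Y j)) =
    ∏ j, minorDet (B j * rowCast (h j) (C (j - 1))) (X j) (Y (j - 1)) := by
  rw [← shift_prod (fun j => minorDet (B j * rowCast (h j) (C (j - 1))) (X j) (Y (j - 1)))]
  have h1 : ∀ j : Fin d,
      minorDet (B (j + 1) * rowCast (h (j + 1)) (C (j + 1 - 1))) (X (j + 1)) (Y (j + 1 - 1)) =
      ∑ V, minorDet (B (j + 1)) (X (j + 1)) V * minorDet (C j) V (Y j) := by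
    intro j
    rw [rowCast_shift B C X Y (j + 1 - 1) j (by simp), minorDet_mul]
  simp only [h1]
  rw [Fintype.prod_sum, shift_sum (ι := fun j => Finset (Fin (n j)))]
  refine Finset.sum_congr rfl fun U _ => ?_
  rw [Finset.prod_mul_distrib, shift_prod (fun j => minorDet (B j) (X j) (U j))]

theorem minor_expand {K : Type} [CommRing K] {p n n' r : ℕ} (B : Matrix (Fin p) (Fin n) K)
    (M : Matrix (Fin n) (Fin n) K) (A : Matrix (Fin n) (Fin n') K) (N : Matrix (Fin n') (Fin n') K)
    (C : Matrix (Fin n') (Fin r) K) (X : Finset (Fin p)) (Y : Finset (Fin r)) :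
    minorDet (B * M * A * N * C) X Y = ∑ U, ∑ S, ∑ T, ∑ V,
      minorDet B X U * minorDet M U S * minorDet A S T * minorDet N T V * minorDet C V Y := by
  rw [Matrix.mul_assoc, Matrix.mul_assoc, Matrix.mul_assoc, minorDet_mul]
  refine Finset.sum_congr rfl fun U _ => ?_
  rw [minorDet_mul, Finset.mul_sum]
  refine Finset.sum_congr rfl fun S _ => ?_
  rw [minorDet_mul, Finset.mul_sum, Finset.mul_sum]
  refine Finset.sum_congr rfl fun T _ => ?_
  rw [minorDet_mul, Finset.mul_sum, Finset.mul_sum, Finset.mul_sum]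
  refine Finset.sum_congr rfl fun V _ => ?_
  ring

theorem stmt_7 {K : Type} [CommRing K] (d : ℕ) [NeZero d]
    (n p r k : Fin d → ℕ) (hk : ∀ j, k j ≤ n j)
    (A : ∀ j : Fin d, Matrix (Fin (n j)) (Fin (n (j + 1))) K)
    (B : ∀ j : Fin d, Matrix (Fin (p j)) (Fin (n j)) K)
    (C : ∀ j : Fin d, Matrix (Fin (n (j + 1))) (Fin (r j)) K)
    (X : ∀ j : Fin d, Finset (Fin (p j))) (hX : ∀ j, (X j).card = k j)
    (Y : ∀ j : Fin d, Finset (Fin (r j))) (hY : ∀ j, (Y j).card = k j) :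
    ∑ ε : (∀ j : Fin d, Fin (n j) → Bool),
      ∑ π : (∀ j : Fin d, Equiv.Perm (Fin (n j))),
        ∏ j : Fin d,
          minorDet
            (B j * (signMatrix K (ε j) * (π j).permMatrix K) * A j *
                (signMatrix K (ε (j + 1)) * (π (j + 1)).permMatrix K)⁻¹ * C j)
            (X j) (Y j) =
      if ∀ j : Fin d, k j = k 0 then
        (1 + 1 : K) ^ (∑ j : Fin d, n j) *
          (∏ j : Fin d,
            (((k j).factorial * (n j - k j).factorial : ℕ) : K) *
              minorDet (B j * rowCast (congrArg n (by simp)) (C (j - 1))) (X j) (Y (j - 1))) *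
          minorSum (cycProd A) (k 0)
      else 0 := by
  simp only [minor_expand]
  have hm := main_sum (K := K) (ι := fun j => Finset (Fin (n j))) (G := fun j => Fin (n j) → Bool)
    (H := fun j => Equiv.Perm (Fin (n j)))
    (fun j U => minorDet (B j) (X j) U)
    (fun j e q U S => minorDet (signMatrix K e * q.permMatrix K) U S)
    (fun j e q U S => minorDet (signMatrix K e * q.permMatrix K)⁻¹ U S)
    (fun j S T => minorDet (A j) S T) (fun j V => minorDet (C j) V (Y j)) _
    (fun j U S T V => averaging U S T V)
  refine hm.trans ?_
  refine (collapse_sum (ι := fun j => Finset (Fin (n j)))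
    (fun U S T V => ∏ j, minorDet (B j) (X j) (U j) * minorDet (A j) (S j) (T (j + 1)) *
      minorDet (C j) (V (j + 1)) (Y j)) (fun j U S => U.card = S.card)
    (fun j U => (1 + 1 : K) ^ (n j) *
      ((U.card.factorial * (n j - U.card).factorial : ℕ) : K))).trans ?_
  split_ifs with hconst
  · have hterm : ∀ U S : (∀ j, Finset (Fin (n j))),
        (∏ j, minorDet (B j) (X j) (U j) * minorDet (A j) (S j) (S (j + 1)) *
          minorDet (C j) (U (j + 1)) (Y j)) *
        ∏ j, (if (U j).card = (S j).card then (1 + 1 : K) ^ (n j) *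
          (((U j).card.factorial * (n j - (U j).card).factorial : ℕ) : K) else 0) =
        (∏ j, (1 + 1 : K) ^ (n j) * (((k j).factorial * (n j - k j).factorial : ℕ) : K)) *
        (((∏ j, minorDet (B j) (X j) (U j)) * ∏ j, minorDet (C j) (U (j + 1)) (Y j)) *
        ∏ j, ((if (S j).card = k 0 then 1 else 0) * minorDet (A j) (S j) (S (j + 1)))) := by
      intro U S
      by_cases hU : ∀ j, (U j).card = k j
      · have h1 : ∀ j, (if (U j).card = (S j).card then (1 + 1 : K) ^ (n j) *
          (((U j).card.factorial * (n j - (U j).card).factorial : ℕ) : K) else 0) =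
          ((1 + 1 : K) ^ (n j) * (((k j).factorial * (n j - k j).factorial : ℕ) : K)) *
            (if (S j).card = k 0 then 1 else 0) := by
          intro j
          rw [hU j, mul_ite, mul_one, mul_zero, hconst j]
          simp only [eq_comm]
        simp only [h1, Finset.prod_mul_distrib]
        ring
      · push Not at hU
        obtain ⟨j, hj⟩ := hU
        have hz : minorDet (B j) (X j) (U j) = 0 :=
          minorDet_ne _ _ _ (by rw [hX]; exact hj.symm)
        have hz2 : ∏ j, minorDet (B j) (X j) (U j) = 0 :=
          Finset.prod_eq_zero (Finset.mem_univ j) hz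
        simp only [Finset.prod_mul_distrib, hz2, zero_mul, mul_zero]
    simp only [hterm]
    simp only [← Finset.mul_sum]
    rw [← Finset.sum_mul, cyc_trace, bc_sum B C X Y (fun j => congrArg n (by simp))]
    simp only [Finset.prod_mul_distrib, Finset.prod_pow_eq_pow_sum, mul_assoc]
    rfl
  · refine Finset.sum_eq_zero fun U _ => Finset.sum_eq_zero fun S _ => ?_
    have : ∃ j, k (j + 1) ≠ k j := by
      by_contra hc
      push Not at hc
      exact hconst (cyc_const d k hc)
    obtain ⟨j, hj⟩ := this
    by_cases hU : (U (j + 1)).card = k (j + 1)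
    · rw [Finset.prod_eq_zero (Finset.mem_univ j), zero_mul]
      rw [minorDet_ne (C j), mul_zero]
      rw [hU, hY]; exact hj
    · rw [Finset.prod_eq_zero (Finset.mem_univ (j + 1)), zero_mul]
      rw [minorDet_ne (B (j + 1)), zero_mul, zero_mul]
      rw [hX]; exact fun h => hU h.symm
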